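/- arXiv:2602.01366 — 3 statements merged into one kernel-verified Lean document; each statement's English description precedes it below -/
import Mathlib

section
/- Let 0 < α ≤ 1 and define f : [0,∞) → ℝ by f(x) = E_α(-x) = ∑_{n=0}^∞ (-x)^n / Γ(αn + 1). Then f is completely monotone on (0,∞): f is infinitely differentiable on (0,∞) and (-1)^k f^{(k)}(x) ≥ 0 for every k ≥ 0 and every x > 0. In particular 0 ≤ E_α(-x) ≤ 1 for all x ≥ 0, and x ↦ E_α(-x) is nonincreasing. -/
open Filter Topology Finset

/-- The coefficient of `z ^ n` in the binomial series of `(1 - z) ^ (-b)`. -/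
noncomputable def negBinomCoeff (b : ℝ) (n : ℕ) : ℝ :=
  ∏ i ∈ range n, (b + i) / (i + 1)

theorem negBinomCoeff_zero (b : ℝ) : negBinomCoeff b 0 = 1 := by
  simp [negBinomCoeff]

theorem negBinomCoeff_succ (b : ℝ) (n : ℕ) :
    negBinomCoeff b (n + 1) = negBinomCoeff b n * ((b + n) / (n + 1)) := by
  rw [negBinomCoeff, prod_range_succ, negBinomCoeff]

theorem succ_mul_negBinomCoeff_succ (b : ℝ) (n : ℕ) :
    (n + 1) * negBinomCoeff b (n + 1) = (b + n) * negBinomCoeff b n := by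
  rw [negBinomCoeff_succ]
  field_simp

/-- Chu–Vandermonde convolution. -/
theorem negBinomCoeff_add (a b : ℝ) (n : ℕ) :
    negBinomCoeff (a + b) n =
      ∑ p ∈ antidiagonal n, negBinomCoeff a p.1 * negBinomCoeff b p.2 := by
  induction n with
  | zero => simp [negBinomCoeff_zero]
  | succ n ih =>
    have hn : ((n : ℝ) + 1) ≠ 0 := by positivity
    apply mul_left_cancel₀ hn
    rw [succ_mul_negBinomCoeff_succ, ih]
    have h1 : ((n : ℝ) + 1) *
        ∑ p ∈ antidiagonal (n + 1), negBinomCoeff a p.1 * negBinomCoeff b p.2 =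
        ∑ p ∈ antidiagonal (n + 1), (p.1 : ℝ) * negBinomCoeff a p.1 * negBinomCoeff b p.2 +
        ∑ p ∈ antidiagonal (n + 1), negBinomCoeff a p.1 * ((p.2 : ℝ) * negBinomCoeff b p.2) := by
      rw [mul_sum, ← sum_add_distrib]
      refine sum_congr rfl fun p hp => ?_
      have : ((p.1 : ℝ) + p.2) = n + 1 := by exact_mod_cast mem_antidiagonal.1 hp
      rw [← this]; ring
    rw [h1, Nat.sum_antidiagonal_succ, Nat.sum_antidiagonal_succ', mul_sum]
    simp only [Nat.cast_zero, zero_mul, mul_zero, zero_add, Nat.cast_add, Nat.cast_one,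
      succ_mul_negBinomCoeff_succ]
    rw [← sum_add_distrib]
    refine sum_congr rfl fun p hp => ?_
    have : ((p.1 : ℝ) + p.2) = n := by exact_mod_cast mem_antidiagonal.1 hp
    rw [← this]; ring

theorem negBinomCoeff_nonneg {b : ℝ} (hb : 0 ≤ b) (n : ℕ) : 0 ≤ negBinomCoeff b n :=
  prod_nonneg fun i _ => by positivity

theorem negBinomCoeff_neg_succ_nonpos {a : ℝ} (ha : 0 ≤ a) (ha1 : a ≤ 1) (n : ℕ) :
    negBinomCoeff (-a) (n + 1) ≤ 0 := by
  induction n with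
  | zero => simpa [negBinomCoeff]
  | succ n ih =>
    rw [negBinomCoeff_succ]
    refine mul_nonpos_of_nonpos_of_nonneg ih (div_nonneg ?_ (by positivity))
    push_cast
    linarith [n.cast_nonneg (α := ℝ)]

theorem abs_negBinomCoeff_le (b : ℝ) (n : ℕ) : |negBinomCoeff b n| ≤ (1 + |b|) ^ n := by
  rw [negBinomCoeff, abs_prod]
  refine (prod_le_prod (g := fun _ => 1 + |b|) (fun _ _ => abs_nonneg _)
    fun i _ => ?_).trans_eq (by simp)
  have hi : (0 : ℝ) ≤ i := i.cast_nonneg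
  rw [abs_div, abs_of_pos (by positivity : (0 : ℝ) < i + 1), div_le_iff₀ (by positivity)]
  have := abs_add_le b i
  rw [abs_of_nonneg hi] at this
  nlinarith [mul_nonneg (abs_nonneg b) hi]

theorem Nat.multichoose_le_succ_pow (k m : ℕ) : k.multichoose m ≤ (m + 1) ^ k := by
  induction k generalizing m with
  | zero => cases m <;> simp
  | succ k ihk =>
    induction m with
    | zero => simp
    | succ m ihm =>
      rw [Nat.multichoose_succ_succ]
      calc k.multichoose (m + 1) + (k + 1).multichoose m
          ≤ (m + 1 + 1) ^ k + (m + 1) ^ (k + 1) := add_le_add (ihk _) ihm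
        _ = (m + 1 + 1) ^ k + (m + 1) ^ k * (m + 1) := by rw [pow_succ (m + 1)]
        _ ≤ (m + 1 + 1) ^ k + (m + 1 + 1) ^ k * (m + 1) := by gcongr; omega
        _ = (m + 1 + 1) ^ (k + 1) := by ring

theorem summable_succ_pow_mul_geometric (d : ℕ) {r : ℝ} (hr0 : 0 ≤ r) (hr : r < 1) :
    Summable fun m : ℕ => ((m : ℝ) + 1) ^ d * r ^ m := by
  have h := ((summable_pow_mul_geometric_of_norm_lt_one d (r := r)
    (by rwa [Real.norm_of_nonneg hr0])).mul_left (2 ^ d)).add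
    (summable_geometric_of_lt_one hr0 hr)
  refine h.of_nonneg_of_le (fun m => by positivity) fun m => ?_
  have : ((m : ℝ) + 1) ^ d ≤ 2 ^ d * (m : ℝ) ^ d + 1 := by
    rcases Nat.eq_zero_or_pos m with rfl | hm
    · simp
    · have hm' : (1 : ℝ) ≤ m := by exact_mod_cast hm
      rw [← mul_pow]
      have : ((m : ℝ) + 1) ^ d ≤ (2 * m) ^ d := by gcongr; linarith
      linarith
  nlinarith [mul_le_mul_of_nonneg_right this (pow_nonneg hr0 m)]

theorem summable_multichoose_mul_negBinomCoeff {l : ℝ} (hl : |l| < 1) (a c : ℝ) (k n : ℕ) :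
    Summable fun m : ℕ => k.multichoose m * (-l) ^ m * negBinomCoeff (a * m + c) n := by
  have h := (summable_succ_pow_mul_geometric (k + n) (abs_nonneg l) hl).mul_left
    ((1 + |a| + |c|) ^ n)
  refine .of_norm_bounded h fun m => ?_
  have h1 : (k.multichoose m : ℝ) ≤ ((m : ℝ) + 1) ^ k := by
    exact_mod_cast Nat.multichoose_le_succ_pow k m
  have h2 : |negBinomCoeff (a * m + c) n| ≤ ((1 + |a| + |c|) * (m + 1)) ^ n := by
    refine (abs_negBinomCoeff_le _ _).trans ?_
    gcongr
    have hm : (0 : ℝ) ≤ m := m.cast_nonneg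
    have := abs_add_le (a * m) c
    rw [abs_mul, abs_of_nonneg hm] at this
    nlinarith [mul_nonneg (abs_nonneg c) hm, abs_nonneg a]
  rw [norm_mul, norm_mul, norm_pow, norm_neg, Real.norm_eq_abs, Real.norm_eq_abs,
    Real.norm_eq_abs, Nat.abs_cast]
  calc k.multichoose m * |l| ^ m * |negBinomCoeff (a * m + c) n|
      ≤ ((m : ℝ) + 1) ^ k * |l| ^ m * ((1 + |a| + |c|) * (m + 1)) ^ n := by gcongr
    _ = _ := by rw [mul_pow, pow_add]; ring

/-- The coefficient of `z ^ n` in `(1 - z) ^ (α - 1) / ((1 - z) ^ α + l) ^ k`, expanded in powers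
of `l`. -/
noncomputable def resolventCoeff (α l : ℝ) (k n : ℕ) : ℝ :=
  ∑' m : ℕ, k.multichoose m * (-l) ^ m * negBinomCoeff (α * m + (α * (k - 1) + 1)) n

theorem sum_antidiagonal_mul_resolventCoeff (α : ℝ) {l : ℝ} (hl : |l| < 1) (k n : ℕ) :
    ∑ p ∈ antidiagonal n, negBinomCoeff (-α) p.1 * resolventCoeff α l (k + 1) p.2 +
      l * resolventCoeff α l (k + 1) n = resolventCoeff α l k n := by
  have hconv : ∑ p ∈ antidiagonal n, negBinomCoeff (-α) p.1 * resolventCoeff α l (k + 1) p.2 =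
      ∑' m : ℕ, (k + 1).multichoose m * (-l) ^ m *
        negBinomCoeff (α * m + (α * (k - 1) + 1)) n := by
    simp only [resolventCoeff, ← tsum_mul_left]
    rw [← Summable.tsum_finsetSum fun p _ =>
      (summable_multichoose_mul_negBinomCoeff hl _ _ _ _).mul_left _]
    refine tsum_congr fun m => ?_
    rw [show α * m + (α * ((k : ℝ) - 1) + 1) =
      -α + (α * m + (α * (((k + 1 : ℕ) : ℝ) - 1) + 1)) by push_cast; ring,
      negBinomCoeff_add, mul_sum]
    exact sum_congr rfl fun p _ => by ring
  rw [hconv, (summable_multichoose_mul_negBinomCoeff hl _ _ _ _).tsum_eq_zero_add,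
    resolventCoeff, resolventCoeff,
    (summable_multichoose_mul_negBinomCoeff hl _ _ k _).tsum_eq_zero_add, ← tsum_mul_left,
    add_assoc, ← Summable.tsum_add
      ((summable_nat_add_iff 1).2 (summable_multichoose_mul_negBinomCoeff hl _ _ _ _))
      ((summable_multichoose_mul_negBinomCoeff hl _ _ _ _).mul_left _)]
  congr 1
  · simp
  · refine tsum_congr fun m => ?_
    rw [Nat.multichoose_succ_succ, show α * m + (α * (((k + 1 : ℕ) : ℝ) - 1) + 1) =
      α * ((m + 1 : ℕ) : ℝ) + (α * ((k : ℝ) - 1) + 1) by push_cast; ring]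
    push_cast
    ring

theorem resolventCoeff_nonneg {α l : ℝ} (hα0 : 0 ≤ α) (hα1 : α ≤ 1) (hl0 : 0 ≤ l) (hl : l < 1)
    (k n : ℕ) : 0 ≤ resolventCoeff α l k n := by
  induction k generalizing n with
  | zero =>
    rw [resolventCoeff, tsum_eq_single 0 fun m hm => by
      obtain ⟨m, rfl⟩ := Nat.exists_eq_succ_of_ne_zero hm
      simp]
    simp only [Nat.multichoose_zero_right, Nat.cast_one, pow_zero, mul_one, one_mul,
      Nat.cast_zero, mul_zero, zero_add]
    exact negBinomCoeff_nonneg (by linarith) n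
  | succ k ihk =>
    induction n using Nat.strong_induction_on with
    | _ n ihn =>
      have h := sum_antidiagonal_mul_resolventCoeff α (abs_of_nonneg hl0 ▸ hl) k n
      rw [Nat.sum_antidiagonal_eq_sum_range_succ
        (fun i j => negBinomCoeff (-α) i * resolventCoeff α l (k + 1) j), sum_range_succ',
        negBinomCoeff_zero, one_mul, Nat.sub_zero] at h
      have hsum : ∑ i ∈ range n, negBinomCoeff (-α) (i + 1) *
          resolventCoeff α l (k + 1) (n - (i + 1)) ≤ 0 :=
        sum_nonpos fun i hi => mul_nonpos_of_nonpos_of_nonneg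
          (negBinomCoeff_neg_succ_nonpos hα0 hα1 i) (ihn _ (by have := mem_range.1 hi; omega))
      have := ihk n
      by_contra! hneg
      nlinarith

/-- The Euler limit formula for the reciprocal Gamma function. -/
theorem tendsto_negBinomCoeff_div_rpow {a : ℝ} (ha : 0 ≤ a) :
    Tendsto (fun n : ℕ => negBinomCoeff (a + 1) n / (n : ℝ) ^ a) atTop
      (𝓝 (1 / Real.Gamma (a + 1))) := by
  have hG : Tendsto (fun n : ℕ => (Real.GammaSeq (a + 1) n)⁻¹) atTop
      (𝓝 (Real.Gamma (a + 1))⁻¹) :=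
    (Real.GammaSeq_tendsto_Gamma (a + 1)).inv₀ (Real.Gamma_pos_of_pos (by linarith)).ne'
  have hq : Tendsto (fun n : ℕ => (n : ℝ) / (n + (a + 1))) atTop (𝓝 1) :=
    tendsto_natCast_div_add_atTop (a + 1)
  have := hq.mul hG
  rw [one_mul, ← one_div] at this
  refine this.congr' ?_
  filter_upwards [eventually_gt_atTop 0] with n hn
  have hn' : (0 : ℝ) < n := by exact_mod_cast hn
  rw [Real.GammaSeq, negBinomCoeff, prod_div_distrib, prod_range_succ, Real.rpow_add hn',
    Real.rpow_one]
  have hf : ∏ i ∈ range n, ((i : ℝ) + 1) = n.factorial := by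
    exact_mod_cast prod_range_add_one_eq_factorial n
  rw [hf]
  have h1 : ((n : ℝ) + (a + 1)) ≠ 0 := by positivity
  have h2 : (n : ℝ) ^ a ≠ 0 := by positivity
  have h3 : (n.factorial : ℝ) ≠ 0 := by positivity
  field_simp
  ring

theorem negBinomCoeff_div_rpow_succ_le {a : ℝ} (ha : 0 ≤ a) {n : ℕ} (hn : 1 ≤ n) :
    negBinomCoeff (a + 1) (n + 1) / ((n + 1 : ℕ) : ℝ) ^ a ≤
      negBinomCoeff (a + 1) n / (n : ℝ) ^ a := by
  have hn' : (0 : ℝ) < n := by exact_mod_cast hn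
  have h1 : (a + 1 + n) / (n + 1) ≤ (((n : ℝ) + 1) / n) ^ a := by
    have hlog : 1 / ((n : ℝ) + 1) ≤ Real.log ((n + 1) / n) := by
      have := Real.one_sub_inv_le_log_of_pos (x := ((n : ℝ) + 1) / n) (by positivity)
      refine le_trans (le_of_eq ?_) this
      field_simp
      ring
    rw [Real.rpow_def_of_pos (by positivity)]
    have h2 := Real.add_one_le_exp (a / ((n : ℝ) + 1))
    refine le_trans (le_of_eq ?_) (h2.trans (Real.exp_le_exp.2 ?_))
    · field_simp; ring
    · rw [div_eq_mul_one_div, mul_comm (Real.log _)]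
      gcongr
  rw [negBinomCoeff_succ]
  push_cast
  have hp : 0 ≤ negBinomCoeff (a + 1) n := negBinomCoeff_nonneg (by linarith) n
  rw [Real.div_rpow (by positivity) hn'.le, le_div_iff₀ (by positivity)] at h1
  rw [div_le_div_iff₀ (by positivity) (by positivity)]
  nlinarith [mul_le_mul_of_nonneg_left h1 hp]

theorem negBinomCoeff_div_rpow_le {a : ℝ} (ha : 0 ≤ a) {N n : ℕ} (hN : 1 ≤ N)
    (hn : N ≤ n) :
    negBinomCoeff (a + 1) n / (n : ℝ) ^ a ≤ negBinomCoeff (a + 1) N / (N : ℝ) ^ a := by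
  induction n, hn using Nat.le_induction with
  | base => rfl
  | succ n hn ih => exact (negBinomCoeff_div_rpow_succ_le ha (hN.trans hn)).trans ih

theorem one_div_Gamma_le {a : ℝ} (ha : 0 ≤ a) {N : ℕ} (hN : 1 ≤ N) :
    1 / Real.Gamma (a + 1) ≤ negBinomCoeff (a + 1) N / (N : ℝ) ^ a :=
  le_of_tendsto (tendsto_negBinomCoeff_div_rpow ha) <| by
    filter_upwards [eventually_ge_atTop N] with n hn
    exact negBinomCoeff_div_rpow_le ha hN hn

theorem multichoose_mul_negBinomCoeff_div_rpow (α x : ℝ) (k : ℕ) {n : ℕ} (hn : 1 ≤ n) (m : ℕ) :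
    (k + 1).multichoose m * (-x) ^ m *
        (negBinomCoeff (α * (k + m) + 1) n / (n : ℝ) ^ (α * (k + m))) =
      ((n : ℝ) ^ (α * k))⁻¹ * ((k + 1).multichoose m * (-(x / (n : ℝ) ^ α)) ^ m *
        negBinomCoeff (α * m + (α * (((k + 1 : ℕ) : ℝ) - 1) + 1)) n) := by
  have hn' : (0 : ℝ) < n := by exact_mod_cast hn
  rw [show α * m + (α * (((k + 1 : ℕ) : ℝ) - 1) + 1) = α * (k + m) + 1 by push_cast; ring,
    ← neg_div, div_pow, ← Real.rpow_mul_natCast hn'.le, mul_add, Real.rpow_add hn']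
  have h1 : (n : ℝ) ^ (α * k) ≠ 0 := by positivity
  have h2 : (n : ℝ) ^ (α * m) ≠ 0 := by positivity
  field_simp

theorem abs_div_rpow_lt_one {α x : ℝ} {n : ℕ} (hn : 1 ≤ n) (hx : |x| < (n : ℝ) ^ α) :
    |x / (n : ℝ) ^ α| < 1 := by
  have hn' : (0 : ℝ) < n := by exact_mod_cast hn
  have h : (0 : ℝ) < (n : ℝ) ^ α := by positivity
  rwa [abs_div, abs_of_pos h, div_lt_one h]

theorem summable_multichoose_mul_negBinomCoeff_div_rpow {α x : ℝ} (k : ℕ) {n : ℕ} (hn : 1 ≤ n)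
    (hx : |x| < (n : ℝ) ^ α) :
    Summable fun m : ℕ => (k + 1).multichoose m * (-x) ^ m *
      (negBinomCoeff (α * (k + m) + 1) n / (n : ℝ) ^ (α * (k + m))) := by
  simp only [multichoose_mul_negBinomCoeff_div_rpow α x k hn]
  exact (summable_multichoose_mul_negBinomCoeff (abs_div_rpow_lt_one hn hx) _ _ _ _).mul_left _

theorem tsum_multichoose_mul_negBinomCoeff_div_rpow_nonneg {α x : ℝ} (hα0 : 0 ≤ α) (hα1 : α ≤ 1)
    (hx0 : 0 ≤ x) (k : ℕ) {n : ℕ} (hn : 1 ≤ n) (hx : |x| < (n : ℝ) ^ α) :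
    0 ≤ ∑' m : ℕ, (k + 1).multichoose m * (-x) ^ m *
      (negBinomCoeff (α * (k + m) + 1) n / (n : ℝ) ^ (α * (k + m))) := by
  simp only [multichoose_mul_negBinomCoeff_div_rpow α x k hn, tsum_mul_left]
  exact mul_nonneg (by positivity) (resolventCoeff_nonneg hα0 hα1 (by positivity)
    ((le_abs_self _).trans_lt (abs_div_rpow_lt_one hn hx)) _ _)

theorem eventually_abs_lt_natCast_rpow {α : ℝ} (hα0 : 0 < α) (x : ℝ) :
    ∀ᶠ n : ℕ in atTop, 1 ≤ n ∧ |x| < (n : ℝ) ^ α :=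
  (eventually_ge_atTop 1).and <|
    ((tendsto_rpow_atTop hα0).comp tendsto_natCast_atTop_atTop).eventually_gt_atTop |x|

/-- The normalized derivative `(-1) ^ k / k! * (d / dx) ^ k E_α(-x)`, as a power series. -/
noncomputable def mittagLefflerDeriv (α : ℝ) (k : ℕ) (x : ℝ) : ℝ :=
  ∑' m : ℕ, (k + 1).multichoose m * (-x) ^ m * (1 / Real.Gamma (α * (k + m) + 1))

theorem summable_mittagLefflerDeriv {α : ℝ} (hα0 : 0 < α) (k : ℕ) (x : ℝ) :
    Summable fun m : ℕ =>
      (k + 1).multichoose m * (-x) ^ m * (1 / Real.Gamma (α * (k + m) + 1)) := by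
  obtain ⟨N, hN, hx⟩ := (eventually_abs_lt_natCast_rpow hα0 x).exists
  refine .of_norm_bounded (summable_multichoose_mul_negBinomCoeff_div_rpow k hN hx).norm
    fun m => ?_
  have hG : 0 < Real.Gamma (α * (k + m) + 1) := Real.Gamma_pos_of_pos (by positivity)
  rw [norm_mul, norm_mul _ (_ / _)]
  refine mul_le_mul_of_nonneg_left ?_ (norm_nonneg _)
  rw [Real.norm_of_nonneg (by positivity)]
  exact (one_div_Gamma_le (by positivity) hN).trans (Real.le_norm_self _)

theorem mittagLefflerDeriv_nonneg {α x : ℝ} (hα0 : 0 < α) (hα1 : α ≤ 1) (hx0 : 0 ≤ x) (k : ℕ) :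
    0 ≤ mittagLefflerDeriv α k x := by
  obtain ⟨N, hN, hx⟩ := (eventually_abs_lt_natCast_rpow hα0 x).exists
  have hlim : Tendsto (fun n : ℕ => ∑' m : ℕ, (k + 1).multichoose m * (-x) ^ m *
      (negBinomCoeff (α * (k + m) + 1) n / (n : ℝ) ^ (α * (k + m)))) atTop
      (𝓝 (mittagLefflerDeriv α k x)) := by
    refine tendsto_tsum_of_dominated_convergence
      (summable_multichoose_mul_negBinomCoeff_div_rpow k hN hx).norm
      (fun m => (tendsto_negBinomCoeff_div_rpow (by positivity)).const_mul _) ?_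
    filter_upwards [eventually_ge_atTop N] with n hn m
    rw [norm_mul, norm_mul _ (_ / _)]
    refine mul_le_mul_of_nonneg_left ?_ (norm_nonneg _)
    have h0 : 0 ≤ negBinomCoeff (α * (k + m) + 1) n := negBinomCoeff_nonneg (by positivity) n
    rw [Real.norm_of_nonneg (by positivity)]
    exact (negBinomCoeff_div_rpow_le (by positivity) hN hn).trans (Real.le_norm_self _)
  refine ge_of_tendsto hlim ?_
  filter_upwards [eventually_abs_lt_natCast_rpow hα0 x] with n hn
  exact tsum_multichoose_mul_negBinomCoeff_div_rpow_nonneg hα0.le hα1 hx0 k hn.1 hn.2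

theorem Nat.succ_mul_multichoose_succ (k m : ℕ) :
    (m + 1) * (k + 1).multichoose (m + 1) = (k + 1) * (k + 2).multichoose m := by
  rw [Nat.multichoose_eq, Nat.multichoose_eq, show k + 1 + (m + 1) - 1 = k + m + 1 by omega,
    show k + 2 + m - 1 = k + m + 1 by omega, mul_comm, Nat.choose_succ_right_eq,
    show k + m + 1 - m = k + 1 by omega, mul_comm]

theorem hasDerivAt_mittagLefflerDeriv {α : ℝ} (hα0 : 0 < α) (k : ℕ) (x : ℝ) :
    HasDerivAt (mittagLefflerDeriv α k) (-((k + 1) * mittagLefflerDeriv α (k + 1) x)) x := by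
  have hterm (y : ℝ) (m : ℕ) : (k + 1).multichoose (m + 1) * (((m + 1 : ℕ) : ℝ) * (-y) ^ m) *
      (1 / Real.Gamma (α * (k + (m + 1 : ℕ)) + 1)) = (k + 1) * ((k + 1 + 1).multichoose m *
      (-y) ^ m * (1 / Real.Gamma (α * ((k + 1 : ℕ) + m) + 1))) := by
    have h : (((m + 1 : ℕ) : ℝ) * (k + 1).multichoose (m + 1)) =
        (k + 1) * (k + 1 + 1).multichoose m := by
      exact_mod_cast Nat.succ_mul_multichoose_succ k m
    rw [show α * ((k : ℝ) + (m + 1 : ℕ)) = α * ((k + 1 : ℕ) + m) by push_cast; ring]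
    linear_combination ((-y) ^ m * (1 / Real.Gamma (α * ((k + 1 : ℕ) + m) + 1))) * h
  have hsum (y : ℝ) : Summable fun m : ℕ => (k + 1).multichoose m * ((m : ℝ) * (-y) ^ (m - 1)) *
      (1 / Real.Gamma (α * (k + m) + 1)) := by
    refine (summable_nat_add_iff 1).1 ?_
    simp only [Nat.add_sub_cancel, hterm]
    exact (summable_mittagLefflerDeriv hα0 (k + 1) y).mul_left _
  have hx : x ∈ Metric.ball (0 : ℝ) (|x| + 1) := by simp
  have hd := hasDerivAt_tsum_of_isPreconnected (hsum (-(|x| + 1))) Metric.isOpen_ball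
    (convex_ball (0 : ℝ) (|x| + 1)).isPreconnected
    (g := fun (m : ℕ) (y : ℝ) =>
      (k + 1).multichoose m * (-y) ^ m * (1 / Real.Gamma (α * (k + m) + 1)))
    (g' := fun (m : ℕ) (y : ℝ) =>
      -((k + 1).multichoose m * ((m : ℝ) * (-y) ^ (m - 1)) *
        (1 / Real.Gamma (α * (k + m) + 1))))
    (fun m y _ => by
      have := (((hasDerivAt_id y).neg.pow m).const_mul ((k + 1).multichoose m : ℝ)).mul_const
        (1 / Real.Gamma (α * (k + m) + 1))
      convert! this using 1
      simp)
    (fun m y hy => by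
      have hG : 0 < Real.Gamma (α * (k + m) + 1) := Real.Gamma_pos_of_pos (by positivity)
      have hy' : |y| ≤ |x| + 1 := by simpa using (mem_ball_zero_iff.1 hy).le
      rw [norm_neg, norm_mul, norm_mul, norm_mul, norm_pow, norm_neg, neg_neg,
        Real.norm_of_nonneg (by positivity : 0 ≤ 1 / Real.Gamma (α * (k + m) + 1)),
        Real.norm_natCast, Real.norm_natCast, Real.norm_eq_abs]
      gcongr)
    hx (summable_mittagLefflerDeriv hα0 k x) hx
  convert! hd using 1
  rw [tsum_neg, (hsum x).tsum_eq_zero_add]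
  simp only [Nat.add_sub_cancel, hterm, tsum_mul_left]
  simp [mittagLefflerDeriv]

theorem iteratedDeriv_mittagLefflerDeriv_zero {α : ℝ} (hα0 : 0 < α) (k : ℕ) :
    iteratedDeriv k (mittagLefflerDeriv α 0) =
      fun x => (-1) ^ k * k.factorial * mittagLefflerDeriv α k x := by
  induction k with
  | zero => simp
  | succ k ih =>
    rw [iteratedDeriv_succ, ih]
    ext x
    rw [((hasDerivAt_mittagLefflerDeriv hα0 k x).const_mul _).deriv, Nat.factorial_succ]
    push_cast
    ring

/-- The Mittag–Leffler relaxation kernel `f(x) = E_α(-x)`, `0 < α ≤ 1`, is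
completely monotone on `(0,∞)`; in particular `0 ≤ E_α(-x) ≤ 1` for `x ≥ 0`
and `x ↦ E_α(-x)` is nonincreasing on `[0,∞)`. -/
theorem mittagLeffler_completely_monotone (α : ℝ) (hα0 : 0 < α) (hα1 : α ≤ 1)
    (f : ℝ → ℝ)
    (hf : ∀ x : ℝ, f x = ∑' n : ℕ, (-x) ^ n / Real.Gamma (α * n + 1)) :
    ContDiffOn ℝ (⊤ : ℕ∞) f (Set.Ioi 0) ∧
      (∀ (k : ℕ) (x : ℝ), 0 < x → 0 ≤ (-1 : ℝ) ^ k * iteratedDeriv k f x) ∧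
      (∀ x : ℝ, 0 ≤ x → 0 ≤ f x ∧ f x ≤ 1) ∧
      AntitoneOn f (Set.Ici 0) := by
  obtain rfl : f = mittagLefflerDeriv α 0 := by
    ext x
    simp [hf, mittagLefflerDeriv, div_eq_mul_inv]
  have hdiff (k : ℕ) : Differentiable ℝ (mittagLefflerDeriv α k) := fun x =>
    (hasDerivAt_mittagLefflerDeriv hα0 k x).differentiableAt
  have hanti : AntitoneOn (mittagLefflerDeriv α 0) (Set.Ici 0) := by
    refine antitoneOn_of_deriv_nonpos (convex_Ici 0) (hdiff 0).continuous.continuousOn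
      (hdiff 0).differentiableOn fun x hx => ?_
    rw [interior_Ici, Set.mem_Ioi] at hx
    rw [(hasDerivAt_mittagLefflerDeriv hα0 0 x).deriv]
    have := mittagLefflerDeriv_nonneg hα0 hα1 hx.le 1
    simpa using this
  refine ⟨(contDiff_of_differentiable_iteratedDeriv fun k _ => ?_).contDiffOn, fun k x hx => ?_,
    fun x hx => ⟨mittagLefflerDeriv_nonneg hα0 hα1 hx 0, ?_⟩, hanti⟩
  · rw [iteratedDeriv_mittagLefflerDeriv_zero hα0]
    exact (hdiff k).const_mul _
  · rw [iteratedDeriv_mittagLefflerDeriv_zero hα0, ← mul_assoc, ← mul_assoc, ← mul_pow]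
    have := mittagLefflerDeriv_nonneg hα0 hα1 hx.le k
    simp only [neg_mul_neg, one_mul, one_pow]
    positivity
  · refine (hanti Set.self_mem_Ici hx hx).trans_eq ?_
    rw [mittagLefflerDeriv, tsum_eq_single 0 fun m hm => by simp [hm]]
    simp
end

section
/- Let 0 < α < 1 and γ ≥ 0 with α + γ ≤ 1, and let c_n be the Kilbas–Saigo coefficients with parameters (a, m, l) = (α, 1 + γ/α, γ/α). Define g(x) = ∑_{n=0}^∞ c_n (-x)^n for x ≥ 0, i.e. g(x) = E_{α, 1+γ/α, γ/α}(-x). Then g is completely monotone on (0,∞): g is infinitely differentiable on (0,∞) and (-1)^k g^{(k)}(x) ≥ 0 for every k ≥ 0 and every x > 0. In particular 0 ≤ g(x) ≤ 1 for all x ≥ 0. -/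
/-- Kilbas–Saigo coefficients: `c 0 = 1` and
`c n = ∏_{k=0}^{n-1} Γ(1 + a(km + l)) / Γ(1 + a(km + l + 1))`. -/
noncomputable def ksCoeff (a m l : ℝ) (n : ℕ) : ℝ :=
  ∏ k ∈ Finset.range n,
    Real.Gamma (1 + a * (k * m + l)) / Real.Gamma (1 + a * (k * m + l + 1))

open Filter Topology MeasureTheory ProbabilityTheory

/-- The exponential generating function `x ↦ ∑ b n (-x)^n / n!`. -/
noncomputable def altEgf (b : ℕ → ℝ) (x : ℝ) : ℝ :=
  ∑' n : ℕ, b n / (n.factorial : ℝ) * (-x) ^ n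

/-- The exponential generating function of `b` converges absolutely everywhere. -/
def EntireEgf (b : ℕ → ℝ) : Prop :=
  ∀ R : ℝ, 0 ≤ R → Summable fun n : ℕ => |b n| / (n.factorial : ℝ) * R ^ n

/-- The sequence `b` has an entire generating function `altEgf b`, all of whose signed
derivatives are nonnegative on `[0, ∞)`. -/
def IsCMSeq (b : ℕ → ℝ) : Prop :=
  EntireEgf b ∧ ∀ (k : ℕ) (x : ℝ), 0 ≤ x → 0 ≤ altEgf (fun n => b (n + k)) x

lemma EntireEgf.summable {b : ℕ → ℝ} (hb : EntireEgf b) (x : ℝ) :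
    Summable fun n : ℕ => b n / (n.factorial : ℝ) * (-x) ^ n := by
  refine Summable.of_norm ((hb |x| (abs_nonneg x)).congr fun n => ?_)
  simp

lemma EntireEgf.of_abs_le {b c : ℕ → ℝ} (hb : EntireEgf b) (h : ∀ n, |c n| ≤ |b n|) :
    EntireEgf c := by
  intro R hR
  refine Summable.of_nonneg_of_le (fun n => by positivity) (fun n => ?_) (hb R hR)
  have := h n
  gcongr

lemma EntireEgf.shift_one {b : ℕ → ℝ} (hb : EntireEgf b) : EntireEgf fun n => b (n + 1) := by
  intro R hR
  have h := (summable_nat_add_iff 1).2 (hb (2 * (R + 1)) (by positivity))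
  refine Summable.of_nonneg_of_le (fun n => by positivity) (fun n => ?_) h
  have h1 : (((n + 1 : ℕ) : ℝ)) ≤ 2 ^ (n + 1) := by
    exact_mod_cast (Nat.lt_two_pow_self (n := n + 1)).le
  have h2 : R ^ n ≤ (R + 1) ^ (n + 1) := by
    calc R ^ n ≤ (R + 1) ^ n := by gcongr; linarith
      _ ≤ (R + 1) ^ (n + 1) := pow_le_pow_right₀ (by linarith) (Nat.le_succ n)
  have hf : (0 : ℝ) < (n.factorial : ℝ) := by positivity
  have hn : (0 : ℝ) < ((n + 1 : ℕ) : ℝ) := by positivity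
  calc |b (n + 1)| / (n.factorial : ℝ) * R ^ n
      = |b (n + 1)| / ((n + 1).factorial : ℝ) * (((n + 1 : ℕ) : ℝ) * R ^ n) := by
        rw [Nat.factorial_succ]; push_cast; field_simp
    _ ≤ |b (n + 1)| / ((n + 1).factorial : ℝ) * (2 ^ (n + 1) * (R + 1) ^ (n + 1)) := by
        gcongr
    _ = _ := by rw [mul_pow]

lemma EntireEgf.shift {b : ℕ → ℝ} (hb : EntireEgf b) (k : ℕ) :
    EntireEgf fun n => b (n + k) := by
  induction k with
  | zero => simpa using hb
  | succ k ih =>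
    have := ih.shift_one
    simpa only [add_assoc, add_comm 1 k] using this

lemma EntireEgf.hasDerivAt {b : ℕ → ℝ} (hb : EntireEgf b) (x : ℝ) :
    HasDerivAt (altEgf b) (-altEgf (fun n => b (n + 1)) x) x := by
  set R := |x| + 1 with hR
  have hR0 : 0 ≤ R := by positivity
  have hs := hb.shift_one R hR0
  have hu : Summable fun n : ℕ => |b n| / (n.factorial : ℝ) * (n * R ^ (n - 1)) := by
    rw [← summable_nat_add_iff 1]
    refine hs.congr fun n => ?_
    rw [Nat.factorial_succ, Nat.add_sub_cancel]
    push_cast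
    field_simp
  have key := hasDerivAt_tsum_of_isPreconnected (t := Metric.ball (0 : ℝ) R)
    (g := fun n y => b n / (n.factorial : ℝ) * (-y) ^ n)
    (g' := fun n y => b n / (n.factorial : ℝ) * ((n : ℝ) * (-y) ^ (n - 1) * (-1)))
    (y₀ := 0) (y := x) hu
    Metric.isOpen_ball (convex_ball _ _).isPreconnected
    (fun n y _ => (((hasDerivAt_id y).neg.pow n).const_mul _))
    (fun n y hy => by
      have hy' : |y| ≤ R := by simpa using (Metric.mem_ball.1 hy).le
      rw [Real.norm_eq_abs]
      simp only [abs_mul, abs_div, abs_pow, abs_neg, Nat.abs_cast, abs_one, mul_one]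
      gcongr)
    (by simpa using by positivity) (hb.summable 0) (by simp [hR])
  refine key.congr_deriv ?_
  have hsum : Summable fun n : ℕ =>
      b n / (n.factorial : ℝ) * ((n : ℝ) * (-x) ^ (n - 1) * (-1)) := by
    refine Summable.of_norm_bounded hu fun n => ?_
    rw [Real.norm_eq_abs]
    simp only [abs_mul, abs_div, abs_pow, abs_neg, Nat.abs_cast, abs_one, mul_one]
    have : |x| ≤ R := by simp [hR]
    gcongr
  rw [hsum.tsum_eq_zero_add, altEgf, ← tsum_neg]
  simp only [Nat.cast_zero, zero_mul, mul_zero, zero_add]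
  refine tsum_congr fun n => ?_
  rw [Nat.factorial_succ, Nat.add_sub_cancel]
  push_cast
  field_simp

lemma EntireEgf.iteratedDeriv_altEgf {b : ℕ → ℝ} (hb : EntireEgf b) (k : ℕ) :
    iteratedDeriv k (altEgf b) = fun x => (-1) ^ k * altEgf (fun n => b (n + k)) x := by
  induction k with
  | zero => simp
  | succ k ih =>
    rw [iteratedDeriv_succ, ih]
    ext x
    rw [(((hb.shift k).hasDerivAt x).const_mul _).deriv]
    simp only [add_assoc, add_comm 1 k]
    ring

lemma EntireEgf.contDiff {b : ℕ → ℝ} (hb : EntireEgf b) :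
    ContDiff ℝ (⊤ : ℕ∞) (altEgf b) := by
  refine contDiff_of_differentiable_iteratedDeriv fun k _ => ?_
  rw [hb.iteratedDeriv_altEgf]
  exact fun x => (((hb.shift k).hasDerivAt x).const_mul _).differentiableAt

lemma altEgf_zero (b : ℕ → ℝ) : altEgf b 0 = b 0 := by
  rw [altEgf, tsum_eq_single 0]
  · simp
  · intro n hn
    simp [hn]

lemma IsCMSeq.altEgf_le {b : ℕ → ℝ} (hb : IsCMSeq b) {x : ℝ} (hx : 0 ≤ x) :
    altEgf b x ≤ b 0 := by
  have hanti : AntitoneOn (altEgf b) (Set.Ici 0) := by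
    refine antitoneOn_of_deriv_nonpos (convex_Ici 0) hb.1.contDiff.continuous.continuousOn
      (fun y _ => (hb.1.hasDerivAt y).differentiableAt.differentiableWithinAt) fun y hy => ?_
    rw [(hb.1.hasDerivAt y).deriv]
    have := hb.2 1 y (interior_subset hy)
    linarith
  simpa [altEgf_zero] using hanti (Set.mem_Ici.2 le_rfl) (Set.mem_Ici.2 hx) hx

lemma isCMSeq_pow {s : ℝ} (hs : 0 ≤ s) : IsCMSeq fun n => s ^ n := by
  refine ⟨fun R _ => ?_, fun k x _ => ?_⟩
  · refine (Real.summable_pow_div_factorial (s * R)).congr fun n => ?_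
    rw [abs_of_nonneg (by positivity), mul_pow]
    ring
  · have h : altEgf (fun n => s ^ (n + k)) x = s ^ k * Real.exp (-(s * x)) := by
      rw [Real.exp_eq_exp_ℝ, NormedSpace.exp_eq_tsum_div, ← tsum_mul_left]
      refine tsum_congr fun n => ?_
      rw [neg_pow (s * x), neg_pow x, mul_pow]
      simp only [pow_add]
      ring
    rw [h]
    positivity

lemma IsCMSeq.of_dominated {b : ℕ → ℕ → ℝ} {c B : ℕ → ℝ} (hb : ∀ N, IsCMSeq (b N))
    (hB : EntireEgf B) (hbB : ∀ᶠ N in atTop, ∀ n, |b N n| ≤ |B n|)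
    (hlim : ∀ n, Tendsto (fun N => b N n) atTop (𝓝 (c n))) : IsCMSeq c := by
  have hcB : ∀ n, |c n| ≤ |B n| := fun n =>
    le_of_tendsto (hlim n).abs (hbB.mono fun N h => h n)
  refine ⟨hB.of_abs_le hcB, fun k x hx => ?_⟩
  have ht : Tendsto (fun N => altEgf (fun n => b N (n + k)) x) atTop
      (𝓝 (altEgf (fun n => c (n + k)) x)) := by
    refine tendsto_tsum_of_dominated_convergence (hB.shift k x hx)
      (fun n => ((hlim (n + k)).div_const _).mul_const _) (hbB.mono fun N h n => ?_)
    rw [Real.norm_eq_abs, abs_mul, abs_div, abs_pow, abs_neg, Nat.abs_cast, abs_of_nonneg hx]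
    have := h (n + k)
    gcongr
  exact ge_of_tendsto' ht fun N => (hb N).2 k x hx

lemma IsCMSeq.mul_moment {b : ℕ → ℝ} (hb : IsCMSeq b) {μ : Measure ℝ} [IsProbabilityMeasure μ]
    (hμ : ∀ᵐ t ∂μ, t ∈ Set.Ioo (0 : ℝ) 1) : IsCMSeq fun n => b n * ∫ t, t ^ n ∂μ := by
  have hnorm : ∀ n : ℕ, ∀ᵐ t ∂μ, ‖t ^ n‖ ≤ (1 : ℝ) := fun n => by
    filter_upwards [hμ] with t ht
    rw [norm_pow, Real.norm_eq_abs, abs_of_pos ht.1]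
    exact pow_le_one₀ ht.1.le ht.2.le
  have hpow : ∀ n : ℕ, Integrable (fun t : ℝ => t ^ n) μ := fun n =>
    Integrable.of_bound (by fun_prop) 1 (hnorm n)
  have hmom : ∀ n : ℕ, |∫ t, t ^ n ∂μ| ≤ 1 := fun n => by
    simpa using norm_integral_le_of_norm_le_const (hnorm n)
  refine ⟨hb.1.of_abs_le fun n => ?_, fun k x hx => ?_⟩
  · rw [abs_mul]
    exact mul_le_of_le_one_right (abs_nonneg _) (hmom n)
  · have hs := hasSum_integral_of_summable_integral_norm (μ := μ)
      (F := fun (n : ℕ) (t : ℝ) => b (n + k) / (n.factorial : ℝ) * (-x) ^ n * t ^ (n + k))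
      (fun n => (hpow _).const_mul _) (by
        refine Summable.of_nonneg_of_le (fun n => integral_nonneg fun t => norm_nonneg _)
          (fun n => ?_) (hb.1.shift k x hx)
        have h1 : ∀ᵐ t ∂μ, ‖b (n + k) / (n.factorial : ℝ) * (-x) ^ n * t ^ (n + k)‖ ≤
            |b (n + k)| / (n.factorial : ℝ) * x ^ n := by
          filter_upwards [hnorm (n + k)] with t ht
          rw [norm_mul]
          refine (mul_le_of_le_one_right (norm_nonneg _) ht).trans_eq ?_
          rw [Real.norm_eq_abs, abs_mul, abs_div, abs_pow, abs_neg, Nat.abs_cast,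
            abs_of_nonneg hx]
        refine (integral_mono_ae ((hpow _).const_mul _).norm (integrable_const _) h1).trans_eq ?_
        simp)
    have heq : altEgf (fun n => b (n + k) * ∫ t, t ^ (n + k) ∂μ) x =
        ∫ t, ∑' n : ℕ, b (n + k) / (n.factorial : ℝ) * (-x) ^ n * t ^ (n + k) ∂μ := by
      rw [← hs.tsum_eq]
      refine tsum_congr fun n => ?_
      rw [integral_const_mul]
      ring
    rw [heq]
    refine integral_nonneg_of_ae ?_
    filter_upwards [hμ] with t ht
    have : ∑' n : ℕ, b (n + k) / (n.factorial : ℝ) * (-x) ^ n * t ^ (n + k) =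
        t ^ k * altEgf (fun n => b (n + k)) (x * t) := by
      rw [altEgf, ← tsum_mul_left]
      refine tsum_congr fun n => ?_
      rw [← neg_mul, mul_pow, pow_add]
      ring
    rw [this]
    exact mul_nonneg (pow_nonneg ht.1.le _) (hb.2 k _ (mul_nonneg hx ht.1.le))

lemma ae_betaMeasure_mem_Ioo (p d : ℝ) : ∀ᵐ t ∂betaMeasure p d, t ∈ Set.Ioo (0 : ℝ) 1 := by
  have hm : Measurable (betaPDF p d) := (measurable_betaPDFReal p d).ennreal_ofReal
  rw [betaMeasure, ae_withDensity_iff hm]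
  refine ae_of_all _ fun t ht => ⟨?_, ?_⟩
  · by_contra! h
    exact ht (betaPDF_eq_zero_of_nonpos h)
  · by_contra! h
    exact ht (betaPDF_eq_zero_of_one_le h)

lemma integral_pow_betaMeasure {p d : ℝ} (hp : 0 < p) (hd : 0 < d) (n : ℕ) :
    ∫ t, t ^ n ∂betaMeasure p d = beta (p + n) d / beta p d := by
  have hm : Measurable (betaPDF p d) := (measurable_betaPDFReal p d).ennreal_ofReal
  have hpn : 0 < p + n := by positivity
  have hb := beta_pos hp hd
  have hbn := beta_pos hpn hd
  rw [integral_eq_lintegral_of_nonneg_ae _ (by fun_prop)]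
  · have h : ∀ t, (betaPDF p d * fun t => ENNReal.ofReal (t ^ n)) t =
        ENNReal.ofReal (beta (p + n) d / beta p d) * betaPDF (p + n) d t := by
      intro t
      rw [Pi.mul_apply]
      by_cases h0 : 0 < t
      · by_cases h1 : t < 1
        · rw [betaPDF_of_pos_lt_one h0 h1, betaPDF_of_pos_lt_one h0 h1,
            ← ENNReal.ofReal_mul' (by positivity), ← ENNReal.ofReal_mul (by positivity),
            show p + n - 1 = (p - 1) + n by ring, Real.rpow_add_natCast h0.ne']
          congr 1
          field_simp
        · rw [betaPDF_eq_zero_of_one_le (not_lt.1 h1), betaPDF_eq_zero_of_one_le (not_lt.1 h1)]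
          simp
      · rw [betaPDF_eq_zero_of_nonpos (not_lt.1 h0), betaPDF_eq_zero_of_nonpos (not_lt.1 h0)]
        simp
    rw [betaMeasure, lintegral_withDensity_eq_lintegral_mul _ hm (by fun_prop),
      lintegral_congr h, lintegral_const_mul' _ _ ENNReal.ofReal_ne_top,
      lintegral_betaPDF_eq_one hpn hd, mul_one, ENNReal.toReal_ofReal (by positivity)]
  · filter_upwards [ae_betaMeasure_mem_Ioo p d] with t ht
    exact pow_nonneg ht.1.le n

lemma beta_add_natCast_div_beta {p d : ℝ} (hp : 0 < p) (hd : 0 < d) (n : ℕ) :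
    beta (p + n) d / beta p d = ∏ j ∈ Finset.range n, (p + j) / (p + d + j) := by
  have hb := beta_pos hp hd
  induction n with
  | zero => simp [hb.ne']
  | succ n ih =>
    rw [Finset.prod_range_succ, ← ih]
    have h1 : 0 < p + n := by positivity
    have h2 : 0 < p + n + d := by positivity
    have h3 := Real.Gamma_pos_of_pos h2
    have h4 : beta (p + (n + 1 : ℕ)) d = beta (p + n) d * ((p + n) / (p + d + n)) := by
      rw [beta, beta, show p + (n + 1 : ℕ) = (p + n) + 1 by push_cast; ring,
        show p + n + 1 + d = (p + n + d) + 1 by ring, Real.Gamma_add_one h1.ne',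
        Real.Gamma_add_one h2.ne', show p + d + n = p + n + d by ring]
      field_simp
    rw [h4]
    ring

lemma isCMSeq_pow_mul_prod {s d : ℝ} (hs : 0 ≤ s) (hd : 0 < d) {p : ℕ → ℝ}
    (hp : ∀ i, 0 < p i) (M : ℕ) :
    IsCMSeq fun n => s ^ n *
      ∏ i ∈ Finset.range M, ∏ j ∈ Finset.range n, (p i + j) / (p i + d + j) := by
  induction M with
  | zero => simpa using isCMSeq_pow hs
  | succ M ih =>
    have := isProbabilityMeasureBeta (hp M) hd
    have h := ih.mul_moment (ae_betaMeasure_mem_Ioo (p M) d)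
    simpa only [integral_pow_betaMeasure (hp M) hd, beta_add_natCast_div_beta (hp M) hd,
      mul_assoc, ← Finset.prod_range_succ] using h

lemma isCMSeq_prod {s β δ : ℝ} (hs : 0 ≤ s) (hβ : 0 < β) (hδ : 0 < δ) (M : ℕ) :
    IsCMSeq fun n => ∏ j ∈ Finset.range n, (s *
      ∏ i ∈ Finset.range M, ((j + 1) * δ + i) / ((j + 1) * δ + β + i)) := by
  convert isCMSeq_pow_mul_prod hs (div_pos hβ hδ) (p := fun i => i / δ + 1)
    (fun i => by positivity) M using 2 with n
  rw [Finset.prod_mul_distrib, Finset.prod_const, Finset.card_range, Finset.prod_comm]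
  congr 1
  refine Finset.prod_congr rfl fun i _ => Finset.prod_congr rfl fun j _ => ?_
  field_simp
  ring

lemma prod_div_add_le {y β : ℝ} (hy : 0 < y) (hβ0 : 0 ≤ β) (hβ1 : β ≤ 1) (M : ℕ) :
    ∏ i ∈ Finset.range M, (y + i) / (y + β + i) ≤ (y / (y + M)) ^ β := by
  induction M with
  | zero => simp [hy.ne']
  | succ M ih =>
    have ht : 0 < y + M := by positivity
    have h1 : (y + M) / (y + β + M) ≤ ((y + M) / (y + (M + 1 : ℕ))) ^ β := by
      have h := rpow_one_add_le_one_add_mul_self (s := 1 / (y + M))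
        (by have : 0 ≤ 1 / (y + M) := by positivity
            linarith) hβ0 hβ1
      have e1 : (y + M) / (y + (M + 1 : ℕ)) = (1 + 1 / (y + M))⁻¹ := by
        push_cast; field_simp; ring
      have e2 : (y + M) / (y + β + M) = (1 + β * (1 / (y + M)))⁻¹ := by
        have : 0 < y + β + M := by positivity
        field_simp; ring
      rw [e1, e2, Real.inv_rpow (by positivity)]
      exact inv_anti₀ (by positivity) h
    rw [Finset.prod_range_succ]
    calc _ ≤ (y / (y + M)) ^ β * ((y + M) / (y + (M + 1 : ℕ))) ^ β := by gcongr
      _ = _ := by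
        rw [← Real.mul_rpow (by positivity) (by positivity)]
        congr 1
        field_simp

lemma rpow_mul_prod_div_add_le {y β : ℝ} (hy : 0 < y) (hβ0 : 0 ≤ β) (hβ1 : β ≤ 1) (N : ℕ) :
    (N : ℝ) ^ β * ∏ i ∈ Finset.range (N + 1), (y + i) / (y + β + i) ≤ y ^ β := by
  calc _ ≤ (N : ℝ) ^ β * (y / (y + (N + 1 : ℕ))) ^ β := by
        gcongr; exact prod_div_add_le hy hβ0 hβ1 _
    _ = (N * (y / (y + (N + 1 : ℕ)))) ^ β := by
        rw [Real.mul_rpow (by positivity) (by positivity)]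
    _ ≤ y ^ β := by
        gcongr
        rw [mul_div_assoc', div_le_iff₀ (by positivity)]
        push_cast
        nlinarith

lemma tendsto_rpow_mul_prod_div_add {y β : ℝ} (hy : 0 < y) (hβ : 0 ≤ β) :
    Tendsto (fun N : ℕ => (N : ℝ) ^ β * ∏ i ∈ Finset.range (N + 1), (y + i) / (y + β + i))
      atTop (𝓝 (Real.Gamma (y + β) / Real.Gamma y)) := by
  refine ((Real.GammaSeq_tendsto_Gamma (y + β)).div (Real.GammaSeq_tendsto_Gamma y)
    (Real.Gamma_pos_of_pos hy).ne').congr' ?_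
  filter_upwards [eventually_gt_atTop 0] with N hN
  have hN' : (0 : ℝ) < N := by exact_mod_cast hN
  have h1 : 0 < ∏ i ∈ Finset.range (N + 1), (y + i) := Finset.prod_pos fun i _ => by positivity
  have h2 : 0 < ∏ i ∈ Finset.range (N + 1), (y + β + i) :=
    Finset.prod_pos fun i _ => by positivity
  have h3 : 0 < (N : ℝ) ^ y := by positivity
  rw [Pi.div_apply, Real.GammaSeq, Real.GammaSeq, Real.rpow_add hN', Finset.prod_div_distrib]
  field_simp

lemma entireEgf_prod_rpow {α δ : ℝ} (hα : 0 < α) (hδ : 0 < δ) :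
    EntireEgf fun n : ℕ => ∏ j ∈ Finset.range n, (((j : ℝ) + 1) * δ) ^ (1 - α) / δ := by
  intro R hR
  rcases hR.eq_or_lt with rfl | hR
  · exact summable_of_ne_finset_zero (s := {0}) fun n hn => by
      simp_all
  have hpos : ∀ n : ℕ, 0 < ∏ j ∈ Finset.range n, (((j : ℝ) + 1) * δ) ^ (1 - α) / δ :=
    fun n => Finset.prod_pos fun j _ => by positivity
  refine summable_of_ratio_test_tendsto_lt_one (l := 0) zero_lt_one
    (Eventually.of_forall fun n => by have := hpos n; positivity) ?_
  have hlim : Tendsto (fun n : ℕ => (((n : ℝ) + 1) * δ) ^ (-α) * R) atTop (𝓝 (0 * R)) := by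
    refine ((tendsto_rpow_neg_atTop hα).comp ?_).mul_const _
    exact (tendsto_atTop_add_const_right _ _ tendsto_natCast_atTop_atTop).atTop_mul_const hδ
  rw [zero_mul] at hlim
  refine hlim.congr fun n => ?_
  have hn := hpos n
  have hy : 0 < ((n : ℝ) + 1) * δ := by positivity
  rw [Real.norm_of_nonneg (by positivity), Real.norm_of_nonneg (by positivity),
    abs_of_pos hn, abs_of_pos (hpos (n + 1)), Finset.prod_range_succ, Nat.factorial_succ,
    show (1 - α) = -α + 1 by ring, Real.rpow_add_one hy.ne']
  rw [show (1 - α) = -α + 1 by ring] at hn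
  push_cast
  rw [pow_succ]
  field_simp

lemma isCMSeq_prod_Gamma {α δ : ℝ} (hα0 : 0 < α) (hα1 : α < 1) (hδ : 0 < δ) :
    IsCMSeq fun n => ∏ j ∈ Finset.range n,
      Real.Gamma (((j : ℝ) + 1) * δ + (1 - α)) / Real.Gamma (((j : ℝ) + 1) * δ) / δ := by
  have hβ : 0 < 1 - α := by linarith
  refine IsCMSeq.of_dominated
    (fun N => isCMSeq_prod (s := (N : ℝ) ^ (1 - α) / δ) (by positivity) hβ hδ (N + 1))
    (entireEgf_prod_rpow hα0 hδ) (Eventually.of_forall fun N n => ?_) fun n => ?_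
  · rw [Finset.abs_prod, Finset.abs_prod]
    refine Finset.prod_le_prod (fun _ _ => abs_nonneg _) fun j _ => ?_
    have hy : 0 < ((j : ℝ) + 1) * δ := by positivity
    rw [abs_of_nonneg (mul_nonneg (by positivity) (Finset.prod_nonneg fun i _ => by positivity)),
      abs_of_pos (by positivity), div_mul_eq_mul_div]
    gcongr
    exact rpow_mul_prod_div_add_le hy hβ.le (by linarith) N
  · refine tendsto_finsetProd _ fun j _ => ?_
    have hy : 0 < ((j : ℝ) + 1) * δ := by positivity
    refine ((tendsto_rpow_mul_prod_div_add hy hβ.le).div_const δ).congr fun N => ?_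
    ring

lemma ksCoeff_eq {α γ : ℝ} (hα0 : 0 < α) (hγ : 0 ≤ γ) (n : ℕ) :
    ksCoeff α (1 + γ / α) (γ / α) n =
      (∏ j ∈ Finset.range n, Real.Gamma (((j : ℝ) + 1) * (α + γ) + (1 - α)) /
        Real.Gamma (((j : ℝ) + 1) * (α + γ)) / (α + γ)) / (n.factorial : ℝ) := by
  rw [← Finset.prod_range_add_one_eq_factorial, Nat.cast_prod, ← Finset.prod_div_distrib]
  refine Finset.prod_congr rfl fun j _ => ?_
  have hy : 0 < ((j : ℝ) + 1) * (α + γ) := by positivity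
  have hG := Real.Gamma_pos_of_pos hy
  rw [show 1 + α * (j * (1 + γ / α) + γ / α) = ((j : ℝ) + 1) * (α + γ) + (1 - α) by
      field_simp; ring,
    show 1 + α * (j * (1 + γ / α) + γ / α + 1) = ((j : ℝ) + 1) * (α + γ) + 1 by
      field_simp; ring, Real.Gamma_add_one hy.ne']
  push_cast
  field_simp

/-- The stretched relaxation kernel `g(x) = E_{α,1+γ/α,γ/α}(-x)` is completely
monotone on `(0,∞)`; in particular `0 ≤ g(x) ≤ 1` for `x ≥ 0`. -/
theorem kilbasSaigo_completely_monotone (α γ : ℝ)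
    (hα0 : 0 < α) (hα1 : α < 1) (hγ : 0 ≤ γ) (hαγ : α + γ ≤ 1)
    (g : ℝ → ℝ)
    (hg : ∀ x : ℝ, g x = ∑' n : ℕ, ksCoeff α (1 + γ / α) (γ / α) n * (-x) ^ n) :
    ContDiffOn ℝ (⊤ : ℕ∞) g (Set.Ioi 0) ∧
      (∀ (k : ℕ) (x : ℝ), 0 < x → 0 ≤ (-1 : ℝ) ^ k * iteratedDeriv k g x) ∧
      (∀ x : ℝ, 0 ≤ x → 0 ≤ g x ∧ g x ≤ 1) := by
  have hb := isCMSeq_prod_Gamma hα0 hα1 (add_pos_of_pos_of_nonneg hα0 hγ)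
  set b : ℕ → ℝ := fun n => ∏ j ∈ Finset.range n,
    Real.Gamma (((j : ℝ) + 1) * (α + γ) + (1 - α)) /
      Real.Gamma (((j : ℝ) + 1) * (α + γ)) / (α + γ) with hbdef
  have hgb : g = altEgf b := by
    ext x
    rw [hg, altEgf]
    exact tsum_congr fun n => by rw [ksCoeff_eq hα0 hγ]
  rw [hgb]
  refine ⟨hb.1.contDiff.contDiffOn, fun k x hx => ?_, fun x hx => ⟨?_, ?_⟩⟩
  · rw [hb.1.iteratedDeriv_altEgf, ← mul_assoc, ← mul_pow]
    simpa using hb.2 k x hx.le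
  · simpa using hb.2 0 x hx
  · simpa [hbdef] using hb.altEgf_le hx
end

section
/- Let 0 < α < 1. Then for every x ≥ 0 the Mittag–Leffler function satisfies the two-sided bound 1 / (1 + Γ(1-α) x) ≤ E_α(-x) ≤ 1 / (1 + x / Γ(1+α)). In particular, for any κ > 0 and any ε > 0, e^{εt} E_α(-κ t^α) → +∞ as t → +∞, so the relaxation E_α(-κ t^α) decays slower than any exponential. -/
open Filter
open MeasureTheory Set Topology

/-- The two-parameter Mittag-Leffler function. -/
noncomputable def mittagLeffler (a b z : ℝ) : ℝ := ∑' n : ℕ, z ^ n / Real.Gamma (a * n + b)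

lemma Real.rpow_mul_exp_neg_le_Gamma {R y : ℝ} (hR : 0 < R) (hy : 1 ≤ y) :
    R ^ (y - 1) * Real.exp (-R) ≤ Real.Gamma y := by
  have hi := Real.GammaIntegral_convergent (show 0 < y by linarith)
  rw [Real.Gamma_eq_integral (by linarith), ← integral_exp_neg_Ioi, ← integral_const_mul]
  calc ∫ x in Ioi R, R ^ (y - 1) * Real.exp (-x)
      ≤ ∫ x in Ioi R, Real.exp (-x) * x ^ (y - 1) := by
        refine setIntegral_mono_on ((integrableOn_exp_neg_Ioi R).const_mul _)
          (hi.mono_set (Ioi_subset_Ioi hR.le)) measurableSet_Ioi fun x hx => ?_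
        rw [mul_comm]
        have hRx : R ≤ x := le_of_lt hx
        gcongr
    _ ≤ ∫ x in Ioi 0, Real.exp (-x) * x ^ (y - 1) := by
        refine setIntegral_mono_set hi ?_ (Ioi_subset_Ioi hR.le).eventuallyLE
        filter_upwards [ae_restrict_mem measurableSet_Ioi] with x hx
        have : (0 : ℝ) < x := hx
        positivity

lemma summable_abs_pow_div_Gamma {a b : ℝ} (ha : 0 < a) (hb : 0 < b) (z : ℝ) :
    Summable fun n : ℕ => |z| ^ n / Real.Gamma (a * n + b) := by
  set R : ℝ := (|z| + 1) ^ (1 / a) with hRdef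
  have hR : 0 < R := by positivity
  have hRa : R ^ a = |z| + 1 := by
    rw [hRdef, ← Real.rpow_mul (by positivity), one_div_mul_cancel ha.ne', Real.rpow_one]
  have hg : Summable fun n : ℕ => (R ^ (b - 1) * Real.exp (-R))⁻¹ * (|z| / (|z| + 1)) ^ n := by
    refine (summable_geometric_of_lt_one (by positivity) ?_).mul_left _
    rw [div_lt_one (by positivity)]
    linarith
  refine hg.of_norm_bounded_eventually_nat ?_
  have hev : ∀ᶠ n : ℕ in atTop, 1 ≤ a * n :=
    (tendsto_natCast_atTop_atTop.const_mul_atTop ha).eventually_ge_atTop 1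
  filter_upwards [hev] with n hn
  have hG := Real.rpow_mul_exp_neg_le_Gamma hR (show 1 ≤ a * n + b by linarith)
  have hpow : R ^ (a * n + b - 1) = (|z| + 1) ^ n * R ^ (b - 1) := by
    rw [add_sub_assoc, Real.rpow_add hR, Real.rpow_mul hR.le, hRa, Real.rpow_natCast]
  rw [hpow] at hG
  have hGpos : 0 < Real.Gamma (a * n + b) := Real.Gamma_pos_of_pos (by linarith)
  rw [Real.norm_of_nonneg (by positivity)]
  calc |z| ^ n / Real.Gamma (a * n + b)
      ≤ |z| ^ n / ((|z| + 1) ^ n * R ^ (b - 1) * Real.exp (-R)) := by gcongr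
    _ = _ := by rw [div_pow]; field_simp

lemma summable_pow_div_Gamma {a b : ℝ} (ha : 0 < a) (hb : 0 < b) (z : ℝ) :
    Summable fun n : ℕ => z ^ n / Real.Gamma (a * n + b) := by
  refine (summable_abs_pow_div_Gamma ha hb z).of_norm_bounded fun n => ?_
  have : 0 < Real.Gamma (a * n + b) := Real.Gamma_pos_of_pos (by positivity)
  rw [norm_div, norm_pow, Real.norm_eq_abs, Real.norm_of_nonneg this.le]

lemma mittagLeffler_zero {a b : ℝ} : mittagLeffler a b 0 = (Real.Gamma b)⁻¹ := by
  rw [mittagLeffler, tsum_eq_single 0 fun n hn => by simp [hn]]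
  simp

lemma mittagLeffler_eq_add {a b : ℝ} (ha : 0 < a) (hb : 0 < b) (z : ℝ) :
    mittagLeffler a b z = (Real.Gamma b)⁻¹ + z * mittagLeffler a (a + b) z := by
  rw [mittagLeffler, (summable_pow_div_Gamma ha hb z).tsum_eq_zero_add, mittagLeffler,
    ← tsum_mul_left]
  congr 1
  · simp
  · refine tsum_congr fun n => ?_
    rw [pow_succ', mul_div_assoc]
    congr 3
    push_cast
    ring

lemma analyticOnNhd_mittagLeffler {a b : ℝ} (ha : 0 < a) (hb : 0 < b) :
    AnalyticOnNhd ℝ (mittagLeffler a b) univ := by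
  set p := FormalMultilinearSeries.ofScalars ℝ fun n : ℕ => (Real.Gamma (a * n + b))⁻¹ with hp
  have hr : p.radius = ⊤ := by
    refine p.radius_eq_top_of_summable_norm fun r => ?_
    convert summable_abs_pow_div_Gamma ha hb r using 2 with n
    have : 0 < Real.Gamma (a * n + b) := Real.Gamma_pos_of_pos (by positivity)
    rw [hp, FormalMultilinearSeries.ofScalars_norm, Real.norm_of_nonneg (by positivity),
      NNReal.abs_eq, inv_mul_eq_div]
  have hs : mittagLeffler a b = p.sum := by
    ext z
    have := FormalMultilinearSeries.ofScalars_sum_eq (E := ℝ)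
      (fun n : ℕ => (Real.Gamma (a * n + b))⁻¹) z
    rw [FormalMultilinearSeries.ofScalarsSum] at this
    rw [hp, this, mittagLeffler]
    exact tsum_congr fun n => by rw [smul_eq_mul, inv_mul_eq_div]
  have h := (p.hasFPowerSeriesOnBall (by simp [hr])).analyticOnNhd
  rw [hr, Metric.eball_top] at h
  rwa [hs]

lemma intervalIntegrable_rpow_mul_sub_rpow {b c t : ℝ} (hb : 0 < b) (hc : 0 < c) (ht : 0 < t) :
    IntervalIntegrable (fun s => s ^ (b - 1) * (t - s) ^ (c - 1)) volume 0 t := by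
  have left : ∀ {b c : ℝ}, 0 < b →
      IntervalIntegrable (fun s => s ^ (b - 1) * (t - s) ^ (c - 1)) volume 0 (t / 2) := by
    intro b c hb
    refine (intervalIntegral.intervalIntegrable_rpow' (by linarith)).mul_continuousOn ?_
    refine ContinuousOn.rpow_const (by fun_prop) fun s hs => Or.inl ?_
    rw [uIcc_of_le (by linarith)] at hs
    linarith [hs.2]
  refine (left hb).trans ?_
  have := ((left (c := b) hc).comp_sub_left t).symm
  convert this using 2 with s
  · rw [mul_comm]; ring_nf
  · ring
  · ring

lemma integral_rpow_mul_sub_rpow {b c t : ℝ} (hb : 0 < b) (hc : 0 < c) (ht : 0 < t) :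
    ∫ s in 0..t, s ^ (b - 1) * (t - s) ^ (c - 1) =
      t ^ (b + c - 1) * (Real.Gamma b * Real.Gamma c / Real.Gamma (b + c)) := by
  have h := Complex.betaIntegral_scaled b c ht
  rw [Complex.betaIntegral_eq_Gamma_mul_div b c (by simpa) (by simpa)] at h
  have e : ∫ s in 0..t, (s : ℂ) ^ ((b : ℂ) - 1) * ((t : ℂ) - s) ^ ((c : ℂ) - 1) =
      ∫ s in 0..t, ((s ^ (b - 1) * (t - s) ^ (c - 1) : ℝ) : ℂ) := by
    refine intervalIntegral.integral_congr fun s hs => ?_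
    rw [uIcc_of_le ht.le] at hs
    rw [Complex.ofReal_mul, Complex.ofReal_cpow hs.1, Complex.ofReal_cpow (by linarith [hs.2])]
    push_cast
    rfl
  rw [e, intervalIntegral.integral_ofReal, Complex.Gamma_ofReal, Complex.Gamma_ofReal,
    ← Complex.ofReal_add, Complex.Gamma_ofReal, ← Complex.ofReal_one, ← Complex.ofReal_sub,
    ← Complex.ofReal_cpow ht.le] at h
  exact_mod_cast h

lemma integral_mul_mittagLeffler {a b c t : ℝ} (ha : 0 < a) (hb : 0 < b) (hc : 0 < c)
    (ht : 0 < t) (z : ℝ) :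
    ∫ s in 0..t, s ^ (b - 1) * (t - s) ^ (c - 1) * mittagLeffler a b (z * s ^ a) =
      Real.Gamma c * t ^ (b + c - 1) * mittagLeffler a (b + c) (z * t ^ a) := by
  set F : ℕ → ℝ → ℝ := fun n s =>
    z ^ n / Real.Gamma (a * n + b) * (s ^ (a * n + b - 1) * (t - s) ^ (c - 1)) with hF
  have hb' (n : ℕ) : 0 < a * n + b := by positivity
  have hG (n : ℕ) : 0 < Real.Gamma (a * n + b) := Real.Gamma_pos_of_pos (hb' n)
  have hbeta (n : ℕ) (w : ℝ) : w ^ n / Real.Gamma (a * n + b) *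
      ∫ s in 0..t, s ^ (a * n + b - 1) * (t - s) ^ (c - 1) =
      Real.Gamma c * t ^ (b + c - 1) * ((w * t ^ a) ^ n / Real.Gamma (a * n + (b + c))) := by
    rw [integral_rpow_mul_sub_rpow (hb' n) hc ht, mul_pow, ← Real.rpow_mul_natCast ht.le,
      show a * n + b + c - 1 = (b + c - 1) + a * n by ring, Real.rpow_add ht, ← add_assoc]
    have := (hG n).ne'
    field_simp
  have hint (n : ℕ) : IntervalIntegrable (F n) volume 0 t :=
    (intervalIntegrable_rpow_mul_sub_rpow (hb' n) hc ht).const_mul _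
  have hnorm (n : ℕ) : ∫ s in Ioc 0 t, ‖F n s‖ =
      Real.Gamma c * t ^ (b + c - 1) * ((|z| * t ^ a) ^ n / Real.Gamma (a * n + (b + c))) := by
    rw [← hbeta, ← intervalIntegral.integral_of_le ht.le, ← intervalIntegral.integral_const_mul]
    refine intervalIntegral.integral_congr fun s hs => ?_
    rw [uIcc_of_le ht.le] at hs
    have h1 : 0 ≤ s ^ (a * n + b - 1) := Real.rpow_nonneg hs.1 _
    have h2 : 0 ≤ (t - s) ^ (c - 1) := Real.rpow_nonneg (by linarith [hs.2]) _
    simp only [hF, norm_mul, norm_div, norm_pow, Real.norm_eq_abs, abs_of_nonneg h1,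
      abs_of_nonneg h2, abs_of_pos (hG n)]
  have hsum : Summable fun n => ∫ s in Ioc 0 t, ‖F n s‖ := by
    simp_rw [hnorm]
    exact (summable_pow_div_Gamma ha (add_pos hb hc) _).mul_left _
  have key := integral_tsum_of_summable_integral_norm (fun n => (hint n).1) hsum
  rw [mittagLeffler, ← tsum_mul_left, intervalIntegral.integral_of_le ht.le]
  refine Eq.trans ?_ (key.symm.trans (tsum_congr fun n => ?_))
  · refine setIntegral_congr_fun measurableSet_Ioc fun s hs => ?_
    rw [mittagLeffler, ← tsum_mul_left]
    refine tsum_congr fun n => ?_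
    simp only [hF]
    rw [mul_pow, ← Real.rpow_mul_natCast hs.1.le,
      show a * n + b - 1 = (b - 1) + a * n by ring, Real.rpow_add hs.1]
    ring
  · rw [← hbeta, ← intervalIntegral.integral_of_le ht.le,
      ← intervalIntegral.integral_const_mul]

lemma continuous_mittagLeffler {a b : ℝ} (ha : 0 < a) (hb : 0 < b) :
    Continuous (mittagLeffler a b) :=
  continuousOn_univ.mp (analyticOnNhd_mittagLeffler ha hb).continuousOn

lemma intervalIntegrable_mul_mittagLeffler {a b c d t : ℝ} (ha : 0 < a) (hb : 0 < b)
    (hc : 0 < c) (hd : 0 < d) (ht : 0 < t) (z : ℝ) :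
    IntervalIntegrable
      (fun s => s ^ (d - 1) * (t - s) ^ (c - 1) * mittagLeffler a b (z * s ^ a)) volume 0 t := by
  refine (intervalIntegrable_rpow_mul_sub_rpow hd hc ht).mul_continuousOn ?_
  exact ((continuous_mittagLeffler ha hb).comp
    (continuous_const.mul (Real.continuous_rpow_const ha.le))).continuousOn

section Relaxation

variable {α : ℝ}

lemma integral_relaxation_caputo (h0 : 0 < α) (h1 : α < 1) {t : ℝ} (ht : 0 < t) :
    ∫ s in 0..t, s ^ (α - 1) * (t - s) ^ (-α) * mittagLeffler α α (-s ^ α) =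
      Real.Gamma (1 - α) * mittagLeffler α 1 (-t ^ α) := by
  have h := integral_mul_mittagLeffler h0 h0 (sub_pos.mpr h1) ht (-1)
  simpa [show (1 : ℝ) - α - 1 = -α by ring] using h

lemma intervalIntegrable_relaxation_caputo (h0 : 0 < α) (h1 : α < 1) {t : ℝ} (ht : 0 < t) :
    IntervalIntegrable
      (fun s => s ^ (α - 1) * (t - s) ^ (-α) * mittagLeffler α α (-s ^ α)) volume 0 t := by
  have h := intervalIntegrable_mul_mittagLeffler h0 h0 (sub_pos.mpr h1) h0 ht (-1)
  simpa [show (1 : ℝ) - α - 1 = -α by ring] using h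

lemma rpow_mul_mittagLeffler_add_one (h0 : 0 < α) (t : ℝ) :
    t ^ α * mittagLeffler α (α + 1) (-t ^ α) = 1 - mittagLeffler α 1 (-t ^ α) := by
  have h := mittagLeffler_eq_add h0 one_pos (-t ^ α)
  rw [Real.Gamma_one] at h
  linarith

lemma integral_relaxation_density (h0 : 0 < α) {t : ℝ} (ht : 0 < t) :
    ∫ s in 0..t, s ^ (α - 1) * mittagLeffler α α (-s ^ α) =
      1 - mittagLeffler α 1 (-t ^ α) := by
  have h := integral_mul_mittagLeffler h0 h0 one_pos ht (-1)
  rw [← rpow_mul_mittagLeffler_add_one h0]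
  simpa using h

lemma intervalIntegrable_relaxation_density (h0 : 0 < α) {t : ℝ} (ht : 0 < t) :
    IntervalIntegrable (fun s => s ^ (α - 1) * mittagLeffler α α (-s ^ α)) volume 0 t := by
  have h := intervalIntegrable_mul_mittagLeffler h0 h0 one_pos h0 ht (-1)
  simpa using h

lemma integral_relaxation_volterra (h0 : 0 < α) {t : ℝ} (ht : 0 < t) :
    ∫ s in 0..t, (t - s) ^ (α - 1) * mittagLeffler α 1 (-s ^ α) =
      Real.Gamma α * (1 - mittagLeffler α 1 (-t ^ α)) := by
  have h := integral_mul_mittagLeffler h0 one_pos h0 ht (-1)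
  rw [← rpow_mul_mittagLeffler_add_one h0, ← mul_assoc]
  simpa [add_comm] using h

lemma intervalIntegrable_relaxation_volterra (h0 : 0 < α) {t : ℝ} (ht : 0 < t) :
    IntervalIntegrable (fun s => (t - s) ^ (α - 1) * mittagLeffler α 1 (-s ^ α)) volume 0 t := by
  have h := intervalIntegrable_mul_mittagLeffler h0 one_pos h0 one_pos ht (-1)
  simpa using h

/-- An analytic function that is positive at the origin and negative somewhere on the right has a
first sign change: it is nonnegative before it and nonpositive shortly after it. -/
lemma exists_first_sign_change {f : ℝ → ℝ} (hf : AnalyticOnNhd ℝ f univ) (hf0 : 0 < f 0)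
    {y : ℝ} (hy : 0 ≤ y) (hfy : f y < 0) :
    ∃ p q, 0 < p ∧ p < q ∧ (∀ x, 0 ≤ x → x ≤ p → 0 ≤ f x) ∧ ∀ x, p < x → x ≤ q → f x < 0 := by
  have hc : Continuous f := continuousOn_univ.mp hf.continuousOn
  set S : Set ℝ := {x | 0 ≤ x ∧ f x < 0}
  have hSb : BddBelow S := ⟨0, fun x hx => hx.1⟩
  have hSn : S.Nonempty := ⟨y, hy, hfy⟩
  set p := sInf S
  have hp0 : 0 ≤ p := le_csInf hSn fun x hx => hx.1
  have hbefore (x : ℝ) (hx : 0 ≤ x) (hxp : x < p) : 0 ≤ f x := by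
    by_contra! h
    exact absurd (csInf_le hSb ⟨hx, h⟩) (not_le.mpr hxp)
  have hpS : f p ≤ 0 := by
    have hcl : p ∈ closure S := csInf_mem_closure hSn hSb
    exact closure_minimal (fun x hx => hx.2.le) (isClosed_le hc continuous_const) hcl
  have hp : 0 < p := hp0.lt_of_ne fun h => by rw [← h] at hpS; linarith
  have hfp : 0 ≤ f p := by
    have hcl : p ∈ closure (Ico 0 p) := by
      rw [closure_Ico hp.ne]
      exact ⟨hp0, le_rfl⟩
    exact closure_minimal (fun x hx => hbefore x hx.1 hx.2)
      (isClosed_le continuous_const hc) hcl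
  have hne : ∀ᶠ x in 𝓝[≠] p, f x ≠ 0 := by
    refine ((hf p (mem_univ p)).eventually_eq_zero_or_eventually_ne_zero).resolve_left fun h => ?_
    have hz := hf.eqOn_zero_of_preconnected_of_eventuallyEq_zero isPreconnected_univ
      (mem_univ p) h (mem_univ 0)
    exact hf0.ne' hz
  obtain ⟨r, hr, hball⟩ := Metric.eventually_nhds_iff.mp (eventually_nhdsWithin_iff.mp hne)
  obtain ⟨s, hs, hsr⟩ := exists_lt_of_csInf_lt hSn (show p < p + r by linarith)
  have hps : p < s := (csInf_le hSb hs).lt_of_ne fun h => by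
    have := hs.2
    rw [← h] at this
    linarith
  refine ⟨p, s, hp, hps, fun x hx hxp => ?_, fun x hx hxs => ?_⟩
  · rcases hxp.lt_or_eq with h | h
    · exact hbefore x hx h
    · rwa [h]
  · by_contra! h
    obtain ⟨w, hw, hw0⟩ := intermediate_value_Icc' hxs hc.continuousOn ⟨hs.2.le, h⟩
    refine hball ?_ (show w ≠ p from (hx.trans_le hw.1).ne') hw0
    rw [Real.dist_eq, abs_lt]
    constructor <;> linarith [hw.1, hw.2]

lemma mittagLeffler_self_neg_nonneg (h0 : 0 < α) (h1 : α < 1) {x : ℝ} (hx : 0 ≤ x) :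
    0 ≤ mittagLeffler α α (-x) := by
  by_contra! hneg
  have han : AnalyticOnNhd ℝ (fun x => mittagLeffler α α (-x)) univ := fun x _ =>
    ((analyticOnNhd_mittagLeffler h0 h0) (-x) (mem_univ _)).comp analyticAt_id.neg
  obtain ⟨p, q, hp, hpq, hpos, hlt⟩ := exists_first_sign_change han
    (by simp [mittagLeffler_zero, Real.Gamma_pos_of_pos h0]) hx hneg
  set t := p ^ (α⁻¹)
  set T := q ^ (α⁻¹)
  have ht : 0 < t := by positivity
  have htT : t < T := Real.rpow_lt_rpow hp.le hpq (by positivity)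
  have hT : 0 < T := ht.trans htT
  have htp : t ^ α = p := Real.rpow_inv_rpow hp.le h0.ne'
  have hTq : T ^ α = q := Real.rpow_inv_rpow (hp.trans hpq).le h0.ne'
  have hbefore {s : ℝ} (hs : 0 < s) (hst : s ≤ t) : 0 ≤ mittagLeffler α α (-s ^ α) :=
    hpos _ (by positivity) (htp ▸ Real.rpow_le_rpow hs.le hst h0.le)
  have hafter {s : ℝ} (hs : t < s) (hsT : s ≤ T) : mittagLeffler α α (-s ^ α) < 0 :=
    hlt _ (htp ▸ Real.rpow_lt_rpow ht.le hs h0)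
      (hTq ▸ Real.rpow_le_rpow (ht.trans hs).le hsT h0.le)
  have hincr : mittagLeffler α 1 (-t ^ α) < mittagLeffler α 1 (-T ^ α) := by
    have hi := intervalIntegrable_relaxation_density h0 hT
    have hit := intervalIntegrable_relaxation_density h0 ht
    have hi' := hit.symm.trans hi
    have hsub := intervalIntegral.integral_add_adjacent_intervals hit hi'
    rw [integral_relaxation_density h0 ht, integral_relaxation_density h0 hT] at hsub
    have hlt0 := intervalIntegral.intervalIntegral_pos_of_pos_on hi'.neg (fun s hs =>
      neg_pos.mpr (mul_neg_of_pos_of_neg (Real.rpow_pos_of_pos (ht.trans hs.1) _)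
        (hafter hs.1 hs.2.le))) htT
    simp only [Pi.neg_apply, intervalIntegral.integral_neg] at hlt0
    linarith
  have hdecr : Real.Gamma (1 - α) * mittagLeffler α 1 (-T ^ α) ≤
      Real.Gamma (1 - α) * mittagLeffler α 1 (-t ^ α) := by
    rw [← integral_relaxation_caputo h0 h1 ht, ← integral_relaxation_caputo h0 h1 hT]
    have hi := intervalIntegrable_relaxation_caputo h0 h1 hT
    have hi1 := hi.mono_set (uIcc_subset_uIcc left_mem_uIcc
      (by rw [uIcc_of_le hT.le]; exact ⟨ht.le, htT.le⟩ : t ∈ uIcc 0 T))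
    have hi2 := hi1.symm.trans hi
    rw [← intervalIntegral.integral_add_adjacent_intervals hi1 hi2]
    have hle1 : ∫ s in 0..t, s ^ (α - 1) * (T - s) ^ (-α) * mittagLeffler α α (-s ^ α) ≤
        ∫ s in 0..t, s ^ (α - 1) * (t - s) ^ (-α) * mittagLeffler α α (-s ^ α) := by
      refine intervalIntegral.integral_mono_on_of_le_Ioo ht.le hi1
        (intervalIntegrable_relaxation_caputo h0 h1 ht) fun s hs => ?_
      have hs0 := hs.1
      refine mul_le_mul_of_nonneg_right (mul_le_mul_of_nonneg_left ?_ (by positivity))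
        (hbefore hs.1 hs.2.le)
      exact Real.rpow_le_rpow_of_nonpos (by linarith [hs.2]) (by linarith) (by linarith)
    have hle2 : ∫ s in t..T, s ^ (α - 1) * (T - s) ^ (-α) * mittagLeffler α α (-s ^ α) ≤ 0 := by
      rw [← neg_nonneg, ← intervalIntegral.integral_neg]
      refine intervalIntegral.integral_nonneg_of_ae_restrict htT.le ?_
      rw [← restrict_Ioo_eq_restrict_Icc]
      filter_upwards [ae_restrict_mem measurableSet_Ioo] with s hs
      have hs0 : 0 < s := ht.trans hs.1
      have hsT : 0 ≤ T - s := by linarith [hs.2]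
      exact neg_nonneg.mpr (mul_nonpos_of_nonneg_of_nonpos (by positivity)
        (hafter hs.1 hs.2.le).le)
    linarith
  exact absurd (le_of_mul_le_mul_left hdecr (Real.Gamma_pos_of_pos (sub_pos.mpr h1)))
    (not_le.mpr hincr)

lemma antitone_relaxation (h0 : 0 < α) (h1 : α < 1) {s t : ℝ} (hs : 0 < s) (hst : s ≤ t) :
    mittagLeffler α 1 (-t ^ α) ≤ mittagLeffler α 1 (-s ^ α) := by
  have ht := hs.trans_le hst
  have his := intervalIntegrable_relaxation_density h0 hs
  have hi' := his.symm.trans (intervalIntegrable_relaxation_density h0 ht)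
  have hsub := intervalIntegral.integral_add_adjacent_intervals his hi'
  rw [integral_relaxation_density h0 hs, integral_relaxation_density h0 ht] at hsub
  have : 0 ≤ ∫ r in s..t, r ^ (α - 1) * mittagLeffler α α (-r ^ α) := by
    refine intervalIntegral.integral_nonneg hst fun r hr => ?_
    have hr0 : 0 < r := hs.trans_le hr.1
    exact mul_nonneg (by positivity) (mittagLeffler_self_neg_nonneg h0 h1 (by positivity))
  linarith

lemma one_le_mul_mittagLeffler (h0 : 0 < α) (h1 : α < 1) {t : ℝ} (ht : 0 < t) :
    1 ≤ (1 + Real.Gamma (1 - α) * t ^ α) * mittagLeffler α 1 (-t ^ α) := by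
  have h : ∫ s in 0..t, t ^ (-α) * (s ^ (α - 1) * mittagLeffler α α (-s ^ α)) ≤
      ∫ s in 0..t, s ^ (α - 1) * (t - s) ^ (-α) * mittagLeffler α α (-s ^ α) := by
    refine intervalIntegral.integral_mono_on_of_le_Ioo ht.le
      ((intervalIntegrable_relaxation_density h0 ht).const_mul _)
      (intervalIntegrable_relaxation_caputo h0 h1 ht) fun s hs => ?_
    have hs0 := hs.1
    rw [← mul_assoc, mul_comm (t ^ (-α))]
    refine mul_le_mul_of_nonneg_right (mul_le_mul_of_nonneg_left ?_ (by positivity))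
      (mittagLeffler_self_neg_nonneg h0 h1 (by positivity))
    exact Real.rpow_le_rpow_of_nonpos (by linarith [hs.2]) (by linarith) (by linarith)
  rw [intervalIntegral.integral_const_mul, integral_relaxation_density h0 ht,
    integral_relaxation_caputo h0 h1 ht, Real.rpow_neg ht.le, inv_mul_le_iff₀ (by positivity)] at h
  linarith

lemma mul_mittagLeffler_le_one (h0 : 0 < α) (h1 : α < 1) {t : ℝ} (ht : 0 < t) :
    (1 + t ^ α / Real.Gamma (1 + α)) * mittagLeffler α 1 (-t ^ α) ≤ 1 := by
  have hone : ∫ s in 0..t, (t - s) ^ (α - 1) = t ^ α / α := by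
    rw [intervalIntegral.integral_comp_sub_left (fun s => s ^ (α - 1)),
      integral_rpow (Or.inl (by linarith))]
    simp [h0.ne']
  have hi : IntervalIntegrable (fun s => (t - s) ^ (α - 1)) volume 0 t := by
    simpa using intervalIntegrable_rpow_mul_sub_rpow one_pos h0 ht
  have h : ∫ s in 0..t, (t - s) ^ (α - 1) * mittagLeffler α 1 (-t ^ α) ≤
      ∫ s in 0..t, (t - s) ^ (α - 1) * mittagLeffler α 1 (-s ^ α) := by
    refine intervalIntegral.integral_mono_on_of_le_Ioo ht.le (hi.mul_const _)
      (intervalIntegrable_relaxation_volterra h0 ht) fun s hs => ?_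
    exact mul_le_mul_of_nonneg_left (antitone_relaxation h0 h1 hs.1 hs.2.le)
      (Real.rpow_nonneg (by linarith [hs.2]) _)
  rw [intervalIntegral.integral_mul_const, hone, integral_relaxation_volterra h0 ht] at h
  have hG := Real.Gamma_pos_of_pos h0
  have h' : t ^ α / Real.Gamma (1 + α) * mittagLeffler α 1 (-t ^ α) ≤
      1 - mittagLeffler α 1 (-t ^ α) := by
    rw [add_comm, Real.Gamma_add_one h0.ne', ← div_div, div_mul_eq_mul_div,
      div_le_iff₀ hG]
    linarith
  linarith

lemma mittagLeffler_neg_bounds (h0 : 0 < α) (h1 : α < 1) {x : ℝ} (hx : 0 ≤ x) :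
    1 / (1 + Real.Gamma (1 - α) * x) ≤ mittagLeffler α 1 (-x) ∧
      mittagLeffler α 1 (-x) ≤ 1 / (1 + x / Real.Gamma (1 + α)) := by
  rcases hx.eq_or_lt with rfl | hx'
  · simp [mittagLeffler_zero]
  have hG1 := Real.Gamma_pos_of_pos (sub_pos.mpr h1)
  have hG2 := Real.Gamma_pos_of_pos (show 0 < 1 + α by linarith)
  have ht : 0 < x ^ α⁻¹ := by positivity
  have htx : (x ^ α⁻¹) ^ α = x := Real.rpow_inv_rpow hx h0.ne'
  have hlow := one_le_mul_mittagLeffler h0 h1 ht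
  have hup := mul_mittagLeffler_le_one h0 h1 ht
  rw [htx] at hlow hup
  exact ⟨(div_le_iff₀' (by positivity)).mpr hlow, (le_div_iff₀' (by positivity)).mpr hup⟩

lemma tendsto_exp_mul_mittagLeffler (h0 : 0 < α) (h1 : α < 1) {κ ε : ℝ} (hκ : 0 < κ)
    (hε : 0 < ε) :
    Tendsto (fun t : ℝ => Real.exp (ε * t) * mittagLeffler α 1 (-(κ * t ^ α))) atTop atTop := by
  have hG := Real.Gamma_pos_of_pos (sub_pos.mpr h1)
  set C := 1 + Real.Gamma (1 - α) * κ with hC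
  have hCpos : 0 < C := by positivity
  refine tendsto_atTop_mono' _ ?_
    ((tendsto_exp_mul_div_rpow_atTop α ε hε).const_mul_atTop (inv_pos.mpr hCpos))
  filter_upwards [eventually_ge_atTop 1] with t ht
  have ht0 : 0 < t := by linarith
  have hta : 1 ≤ t ^ α := Real.one_le_rpow ht h0.le
  calc C⁻¹ * (Real.exp (ε * t) / t ^ α)
      = Real.exp (ε * t) * (1 / (C * t ^ α)) := by field_simp
    _ ≤ Real.exp (ε * t) * (1 / (1 + Real.Gamma (1 - α) * (κ * t ^ α))) := by
        gcongr
        rw [hC]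
        linarith
    _ ≤ _ := by
        gcongr
        exact (mittagLeffler_neg_bounds h0 h1 (by positivity)).1

end Relaxation

/-- Two-sided bound for the Mittag–Leffler kernel, `0 < α < 1`:
`1/(1 + Γ(1-α) x) ≤ E_α(-x) ≤ 1/(1 + x/Γ(1+α))` for `x ≥ 0`; consequently
`e^{ε t} E_α(-κ t^α) → ∞` as `t → ∞` for any `κ, ε > 0`, i.e. the relaxation
decays slower than any exponential. -/
theorem mittagLeffler_two_sided_bound (α : ℝ) (hα0 : 0 < α) (hα1 : α < 1) :
    (∀ x : ℝ, 0 ≤ x →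
        1 / (1 + Real.Gamma (1 - α) * x)
            ≤ (∑' n : ℕ, (-x) ^ n / Real.Gamma (α * n + 1)) ∧
          (∑' n : ℕ, (-x) ^ n / Real.Gamma (α * n + 1))
            ≤ 1 / (1 + x / Real.Gamma (1 + α))) ∧
      ∀ κ ε : ℝ, 0 < κ → 0 < ε →
        Tendsto
          (fun t : ℝ =>
            Real.exp (ε * t) *
              ∑' n : ℕ, (-(κ * t ^ α)) ^ n / Real.Gamma (α * n + 1))
          atTop atTop := by
  exact ⟨fun x hx => mittagLeffler_neg_bounds hα0 hα1 hx, fun κ ε hκ hε =>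
    tendsto_exp_mul_mittagLeffler hα0 hα1 hκ hε⟩
end
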